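/- Let X be a nonempty set of variables, λ ∈ k nonzero, and let r ∈ k[X] ⊗ k[X] be a solution of the associative Yang–Baxter equation of weight λ, i.e., r_{13}r_{12} − r_{12}r_{23} + r_{23}r_{13} = λ r_{13} holds in k[X] ⊗ k[X] ⊗ k[X]. Then r = 0 or r = λ(1 ⊗ 1). -/

import Mathlib

/-!
Write `A = K[X]` and let `μ : A ⊗ A → A` be the multiplication. As `A` is commutative,
`μ ⊗ id : (A ⊗ A) ⊗ A → A ⊗ A` is an algebra homomorphism. It sends both `r₁₃` and `r₂₃` to `r`,
and `r₁₂` to `μ(r) ⊗ 1`. In the image of the associative Yang–Baxter equation the two terms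
involving `μ(r) ⊗ 1` cancel, which leaves `r * r = lam • r`. Since `A ⊗ A ≅ A[X]` is a domain,
`r = 0` or `r = lam • 1`.
-/

open TensorProduct

/-- For `r ∈ A ⊗ A`, the element `r₁₂ = Σ aᵢ ⊗ bᵢ ⊗ 1` of `(A ⊗ A) ⊗ A`,
where `A = K[X]` is the polynomial algebra on a set of variables `X`. -/
noncomputable def aybX12 {K : Type*} [Field K] {X : Type*}
    (r : MvPolynomial X K ⊗[K] MvPolynomial X K) :
    (MvPolynomial X K ⊗[K] MvPolynomial X K) ⊗[K] MvPolynomial X K :=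
  Algebra.TensorProduct.includeLeft (R := K) (S := K) r

/-- For `r ∈ A ⊗ A`, the element `r₁₃ = Σ aᵢ ⊗ 1 ⊗ bᵢ` of `(A ⊗ A) ⊗ A`, `A = K[X]`. -/
noncomputable def aybX13 {K : Type*} [Field K] {X : Type*}
    (r : MvPolynomial X K ⊗[K] MvPolynomial X K) :
    (MvPolynomial X K ⊗[K] MvPolynomial X K) ⊗[K] MvPolynomial X K :=
  Algebra.TensorProduct.map
    (Algebra.TensorProduct.includeLeft (R := K) (S := K) (B := MvPolynomial X K))
    (AlgHom.id K (MvPolynomial X K)) r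

/-- For `r ∈ A ⊗ A`, the element `r₂₃ = Σ 1 ⊗ aᵢ ⊗ bᵢ` of `(A ⊗ A) ⊗ A`, `A = K[X]`. -/
noncomputable def aybX23 {K : Type*} [Field K] {X : Type*}
    (r : MvPolynomial X K ⊗[K] MvPolynomial X K) :
    (MvPolynomial X K ⊗[K] MvPolynomial X K) ⊗[K] MvPolynomial X K :=
  Algebra.TensorProduct.map
    (Algebra.TensorProduct.includeRight (R := K) (A := MvPolynomial X K))
    (AlgHom.id K (MvPolynomial X K)) r

/-- The homomorphism `μ ⊗ id : (A ⊗ A) ⊗ A → A ⊗ A` for `A = K[X]`, where `μ` is the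
multiplication of `A`. -/
noncomputable def mergeFirstTwo (K X : Type*) [Field K] :
    (MvPolynomial X K ⊗[K] MvPolynomial X K) ⊗[K] MvPolynomial X K →ₐ[K]
      MvPolynomial X K ⊗[K] MvPolynomial X K :=
  Algebra.TensorProduct.map (Algebra.TensorProduct.lmul' K) (AlgHom.id K (MvPolynomial X K))

lemma mergeFirstTwo_aybX13 {K X : Type*} [Field K]
    (r : MvPolynomial X K ⊗[K] MvPolynomial X K) : mergeFirstTwo K X (aybX13 r) = r := by
  induction r using TensorProduct.induction_on with
  | zero => simp [aybX13]
  | tmul a b => simp [aybX13, mergeFirstTwo]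
  | add a b ha hb => simpa [aybX13] using congrArg₂ (· + ·) ha hb

lemma mergeFirstTwo_aybX23 {K X : Type*} [Field K]
    (r : MvPolynomial X K ⊗[K] MvPolynomial X K) : mergeFirstTwo K X (aybX23 r) = r := by
  induction r using TensorProduct.induction_on with
  | zero => simp [aybX23]
  | tmul a b => simp [aybX23, mergeFirstTwo]
  | add a b ha hb => simpa [aybX23] using congrArg₂ (· + ·) ha hb

/-- `K[X] ⊗ K[X]` has no zero divisors, being isomorphic to `K[X][X]`. -/
lemma noZeroDivisors_tensor (K X : Type*) [Field K] :
    NoZeroDivisors (MvPolynomial X K ⊗[K] MvPolynomial X K) :=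
  (MvPolynomial.algebraTensorAlgEquiv (σ := X) K (MvPolynomial X K)).injective.noZeroDivisors _
    (map_zero _) (map_mul _)

/- STATEMENT 7.  (Corollary 1 of the paper.)
The only solutions of the associative Yang–Baxter equation of nonzero weight `lam` on the
polynomial algebra `K[X]` over a nonempty set of variables `X` (char `K` = 0) are `0` and
`lam (1 ⊗ 1)`. -/
theorem AYBE_nonzero_weight_on_kX
    {K : Type*} [Field K] [CharZero K] {X : Type*} [Nonempty X]
    (lam : K) (hlam : lam ≠ 0)
    (r : MvPolynomial X K ⊗[K] MvPolynomial X K)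
    (hAYB : aybX13 r * aybX12 r - aybX12 r * aybX23 r + aybX23 r * aybX13 r
      = lam • aybX13 r) :
    r = 0 ∨ r = lam • ((1 : MvPolynomial X K) ⊗ₜ[K] (1 : MvPolynomial X K)) := by
  have := noZeroDivisors_tensor K X
  have h := congrArg (mergeFirstTwo K X) hAYB
  simp only [map_add, map_sub, map_mul, map_smul, mergeFirstTwo_aybX13,
    mergeFirstTwo_aybX23] at h
  have hmul : r * (r - lam • 1) = 0 := by
    rw [mul_sub, mul_smul_comm, mul_one, ← h]
    ring
  rcases mul_eq_zero.mp hmul with h0 | h1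
  · exact Or.inl h0
  · exact Or.inr (sub_eq_zero.mp h1)
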